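/- Let G be a connected simple graph on a finite vertex set V with shortest-path distance d, let A be a nonempty set of anchor vertices, and let d̂(u,v) = min_{a ∈ A} (d(u,a) + d(a,v)). Fix a coverage radius c ≥ 0 and a coverage ratio CR ∈ [0,1], and suppose the set of covered vertices (those within distance c of some anchor in A) has cardinality at least CR·|V|. Then the number of ordered pairs (u,v) ∈ V × V for which the estimation error satisfies d̂(u,v) − d(u,v) ≤ 2c is at least (1 − (1 − CR)²)·|V|². Equivalently, if u and v are drawn independently and uniformly from V, then with probability at least 1 − (1 − CR)² the error of the estimated shortest-path distance is bounded by 2c. -/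

import Mathlib

/-!
If `u` is within distance `c` of an anchor `a`, two triangle inequalities give
`d(u,a) + d(a,v) ≤ 2 d(u,a) + d(u,v) ≤ d(u,v) + 2c`, and symmetrically if `v` is covered.
So a pair whose error exceeds `2c` has both coordinates uncovered. There are at most
`(1 - CR) |V|` uncovered vertices, hence at most `(1 - CR)² |V|²` such pairs.
-/

/-- One covered endpoint suffices for the error bound `2c`. -/
lemma anchor_estimate_le {V : Type*} {G : SimpleGraph V} (hG : G.Connected) {A : Finset V}
    (hA : A.Nonempty) {c : ℕ} {u v : V}
    (h : (∃ a ∈ A, G.dist u a ≤ c) ∨ ∃ a ∈ A, G.dist v a ≤ c) :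
    A.inf' hA (fun a => G.dist u a + G.dist a v) ≤ G.dist u v + 2 * c := by
  rcases h with ⟨a, ha, hc⟩ | ⟨a, ha, hc⟩ <;>
    refine (Finset.inf'_le _ ha).trans ?_
  · have h1 : G.dist a v ≤ G.dist a u + G.dist u v := hG.dist_triangle
    rw [G.dist_comm (u := a) (v := u)] at h1
    omega
  · have h1 : G.dist u a ≤ G.dist u v + G.dist v a := hG.dist_triangle
    rw [G.dist_comm (u := a) (v := v)]
    omega

open Classical in
/-- For a connected simple graph `G` on a finite vertex set `V`,
a nonempty anchor set `A`, coverage radius `c ≥ 0` and coverage ratio `CR ∈ [0,1]`,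
if the set of covered vertices has cardinality at least `CR * |V|`, then the number of
ordered pairs `(u,v)` whose estimation error satisfies `d̂(u,v) - d(u,v) ≤ 2c` is at least
`(1 - (1 - CR)^2) * |V|^2`. -/
theorem anchor_error_bound_probability {V : Type*} [Fintype V] (G : SimpleGraph V)
    (hG : G.Connected) (A : Finset V) (hA : A.Nonempty) (c : ℕ) (CR : ℝ)
    (hCR0 : 0 ≤ CR) (hCR1 : CR ≤ 1)
    (hcov : CR * (Fintype.card V : ℝ) ≤
      ((Finset.univ.filter (fun u : V => ∃ a ∈ A, G.dist u a ≤ c)).card : ℝ)) :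
    (1 - (1 - CR) ^ 2) * (Fintype.card V : ℝ) ^ 2 ≤
      ((Finset.univ.filter (fun p : V × V =>
          A.inf' hA (fun a => G.dist p.1 a + G.dist a p.2) ≤ G.dist p.1 p.2 + 2 * c)).card : ℝ) := by
  set C := Finset.univ.filter (fun u : V => ∃ a ∈ A, G.dist u a ≤ c) with hC
  set P := Finset.univ.filter (fun p : V × V =>
    A.inf' hA (fun a => G.dist p.1 a + G.dist a p.2) ≤ G.dist p.1 p.2 + 2 * c) with hP
  have hsub : Pᶜ ⊆ Cᶜ ×ˢ Cᶜ := by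
    intro p hp
    have hp' : p ∉ P := Finset.mem_compl.mp hp
    rw [Finset.mem_product, Finset.mem_compl, Finset.mem_compl]
    constructor <;> intro hmem <;> refine hp' (Finset.mem_filter.mpr ⟨Finset.mem_univ _, ?_⟩)
    · exact anchor_estimate_le hG hA (Or.inl (Finset.mem_filter.mp hmem).2)
    · exact anchor_estimate_le hG hA (Or.inr (Finset.mem_filter.mp hmem).2)
  have hle : ((Pᶜ.card : ℕ) : ℝ) ≤ (Cᶜ.card : ℝ) * (Cᶜ.card : ℝ) := by
    have := Finset.card_le_card hsub
    rw [Finset.card_product] at this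
    exact_mod_cast this
  have hCc : (C.card : ℝ) + (Cᶜ.card : ℝ) = Fintype.card V := by
    exact_mod_cast Finset.card_add_card_compl C
  have hPc : (P.card : ℝ) + (Pᶜ.card : ℝ) = (Fintype.card V : ℝ) * Fintype.card V := by
    have := Finset.card_add_card_compl P
    rw [Fintype.card_prod] at this
    exact_mod_cast this
  have hunc : (Cᶜ.card : ℝ) ≤ (1 - CR) * Fintype.card V := by linarith
  have hsq := mul_self_le_mul_self (Nat.cast_nonneg (α := ℝ) Cᶜ.card) hunc
  linarith
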